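/- The subgroup ⟨σ, τ, λ₃₀⟩ of GL(3,ℂ) is the internal direct product of the three subgroups S(2,1), ⟨diag(ζ₅, ζ₅, 1)⟩ and ⟨diag(1, 1, ζ₃₀)⟩; in particular it is isomorphic to SL(2,5) × ℤ/5 × ℤ/30 and has order 18000. -/

import Mathlib

noncomputable section
open Matrix

def zeta5 : ℂ := Complex.exp (2 * Real.pi * Complex.I / 5)

def sqrt5 : ℂ := zeta5 - zeta5 ^ 2 - zeta5 ^ 3 + zeta5 ^ 4

def alpha : Matrix (Fin 2) (Fin 2) ℂ := -(Matrix.of ![![zeta5 ^ 3, 0], ![0, zeta5 ^ 2]])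
def beta : Matrix (Fin 2) (Fin 2) ℂ := Matrix.of ![![0, 1], ![-1, 0]]
def gamma : Matrix (Fin 2) (Fin 2) ℂ :=
  (zeta5 ^ 2 - zeta5 ^ 3)⁻¹ •
    Matrix.of ![![zeta5 + zeta5⁻¹, 1], ![1, -(zeta5 + zeta5⁻¹)]]

/-- The block-diagonal embedding of a `2 × 2` matrix into `GL(3)`, with last diagonal entry 1. -/
def emb (A : Matrix (Fin 2) (Fin 2) ℂ) : Matrix (Fin 3) (Fin 3) ℂ :=
  Matrix.of ![![A 0 0, A 0 1, 0], ![A 1 0, A 1 1, 0], ![0, 0, 1]]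

def alpha' : Matrix (Fin 3) (Fin 3) ℂ := emb alpha
def beta' : Matrix (Fin 3) (Fin 3) ℂ := emb beta
def gamma' : Matrix (Fin 3) (Fin 3) ℂ := emb gamma

def sigma : Matrix (Fin 3) (Fin 3) ℂ :=
  Matrix.of ![![(zeta5 - zeta5 ^ 4) / sqrt5, (zeta5 ^ 3 - zeta5 ^ 2) / sqrt5, 0],
    ![(zeta5 ^ 3 - zeta5 ^ 2) / sqrt5, -((zeta5 - zeta5 ^ 4) / sqrt5), 0],
    ![0, 0, 1]]

def tau : Matrix (Fin 3) (Fin 3) ℂ := Matrix.diagonal ![zeta5, 1, 1]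

def rho : Matrix (Fin 3) (Fin 3) ℂ := Matrix.diagonal ![zeta5 ^ 3, zeta5 ^ 2, 1]

/-- The subgroup of `GL(3, ℂ)` generated by the invertible matrices in `S`. -/
def gen3 (S : Set (Matrix (Fin 3) (Fin 3) ℂ)) : Subgroup (GL (Fin 3) ℂ) :=
  Subgroup.closure {g : GL (Fin 3) ℂ | (g : Matrix (Fin 3) (Fin 3) ℂ) ∈ S}

/-- `S(2,1) = ⟨α', β', γ'⟩`. -/
def S21 : Subgroup (GL (Fin 3) ℂ) := gen3 {alpha', beta', gamma'}

abbrev SL25 := Matrix.SpecialLinearGroup (Fin 2) (ZMod 5)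

def lambda30 : Matrix (Fin 3) (Fin 3) ℂ :=
  Matrix.diagonal ![1, 1, Complex.exp (2 * Real.pi * Complex.I / 30)]

/-- `⟨σ, τ, λ₃₀⟩`. -/
def Gt30 : Subgroup (GL (Fin 3) ℂ) := gen3 {sigma, tau, lambda30}

/-- The cyclic subgroup generated by `diag(ζ₅, ζ₅, 1)`. -/
def Dz : Subgroup (GL (Fin 3) ℂ) := gen3 {Matrix.diagonal ![zeta5, zeta5, 1]}

/-- The cyclic subgroup generated by `diag(1, 1, ζ₃₀)`. -/
def L30 : Subgroup (GL (Fin 3) ℂ) := gen3 {lambda30}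

/-- The ring `ℤ[ζ₅]`, in the basis `1, ζ, ζ², ζ³`. -/
@[ext] structure Zf where
  a : ℤ
  b : ℤ
  c : ℤ
  d : ℤ
deriving DecidableEq

namespace Zf

def add (x y : Zf) : Zf := ⟨x.a + y.a, x.b + y.b, x.c + y.c, x.d + y.d⟩
def neg (x : Zf) : Zf := ⟨-x.a, -x.b, -x.c, -x.d⟩
def mul (x y : Zf) : Zf :=
  ⟨x.a * y.a + (x.c * y.d + x.d * y.c) - (x.b * y.d + x.c * y.c + x.d * y.b),
   x.a * y.b + x.b * y.a + x.d * y.d - (x.b * y.d + x.c * y.c + x.d * y.b),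
   x.a * y.c + x.b * y.b + x.c * y.a - (x.b * y.d + x.c * y.c + x.d * y.b),
   x.a * y.d + x.b * y.c + x.c * y.b + x.d * y.a - (x.b * y.d + x.c * y.c + x.d * y.b)⟩

instance : Add Zf := ⟨add⟩
instance : Neg Zf := ⟨neg⟩
instance : Mul Zf := ⟨mul⟩
instance : Zero Zf := ⟨⟨0, 0, 0, 0⟩⟩
instance : One Zf := ⟨⟨1, 0, 0, 0⟩⟩

theorem add_def (x y : Zf) : x + y = ⟨x.a + y.a, x.b + y.b, x.c + y.c, x.d + y.d⟩ := rfl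
theorem neg_def (x : Zf) : -x = ⟨-x.a, -x.b, -x.c, -x.d⟩ := rfl
theorem mul_def (x y : Zf) : x * y =
  ⟨x.a * y.a + (x.c * y.d + x.d * y.c) - (x.b * y.d + x.c * y.c + x.d * y.b),
   x.a * y.b + x.b * y.a + x.d * y.d - (x.b * y.d + x.c * y.c + x.d * y.b),
   x.a * y.c + x.b * y.b + x.c * y.a - (x.b * y.d + x.c * y.c + x.d * y.b),
   x.a * y.d + x.b * y.c + x.c * y.b + x.d * y.a - (x.b * y.d + x.c * y.c + x.d * y.b)⟩ := rfl
theorem zero_def : (0 : Zf) = ⟨0, 0, 0, 0⟩ := rfl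
theorem one_def : (1 : Zf) = ⟨1, 0, 0, 0⟩ := rfl

instance : CommRing Zf where
  add_assoc x y z := by simp only [add_def]; ext <;> ring
  zero_add x := by simp only [add_def, zero_def]; ext <;> ring
  add_zero x := by simp only [add_def, zero_def]; ext <;> ring
  add_comm x y := by simp only [add_def]; ext <;> ring
  neg_add_cancel x := by simp only [add_def, neg_def, zero_def]; ext <;> ring
  mul_assoc x y z := by simp only [mul_def]; ext <;> ring
  one_mul x := by simp only [mul_def, one_def]; ext <;> ring
  mul_one x := by simp only [mul_def, one_def]; ext <;> ring
  left_distrib x y z := by simp only [mul_def, add_def]; ext <;> ring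
  right_distrib x y z := by simp only [mul_def, add_def]; ext <;> ring
  zero_mul x := by simp only [mul_def, zero_def]; ext <;> ring
  mul_zero x := by simp only [mul_def, zero_def]; ext <;> ring
  mul_comm x y := by simp only [mul_def]; ext <;> ring
  nsmul := nsmulRec
  zsmul := zsmulRec

/-- Evaluation at a root of `1 + X + X² + X³ + X⁴`. -/
def eval {S : Type*} [CommRing S] (z : S) (hz : 1 + z + z ^ 2 + z ^ 3 + z ^ 4 = 0) : Zf →+* S where
  toFun x := x.a + x.b * z + x.c * z ^ 2 + x.d * z ^ 3
  map_one' := by simp [one_def]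
  map_zero' := by simp [zero_def]
  map_add' x y := by simp only [add_def]; push_cast; ring
  map_mul' x y := by
    simp only [mul_def]; push_cast
    linear_combination (-(x.b * y.d + x.c * y.c + x.d * y.b : S)
      - (x.c * y.d + x.d * y.c) * (z - 1) - (x.d * y.d) * (z ^ 2 - z)) * hz

end Zf

/-- Raw `2 × 2` matrices over `ℤ[ζ₅]`. -/
@[ext] structure Raw where
  p : Zf
  q : Zf
  r : Zf
  s : Zf
deriving DecidableEq

namespace Raw
def mul (x y : Raw) : Raw :=
  ⟨(x.p.mul y.p).add (x.q.mul y.r), (x.p.mul y.q).add (x.q.mul y.s),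
   (x.r.mul y.p).add (x.s.mul y.r), (x.r.mul y.q).add (x.s.mul y.s)⟩
def one : Raw := ⟨⟨1, 0, 0, 0⟩, ⟨0, 0, 0, 0⟩, ⟨0, 0, 0, 0⟩, ⟨1, 0, 0, 0⟩⟩
def adj (x : Raw) : Raw := ⟨x.s, x.q.neg, x.r.neg, x.p⟩
def A : Raw := ⟨⟨0, 0, 0, -1⟩, ⟨0, 0, 0, 0⟩, ⟨0, 0, 2, 0⟩, ⟨0, 0, -1, 0⟩⟩
def B : Raw := ⟨⟨-2, 0, 0, 0⟩, ⟨1, -1, 0, 0⟩, ⟨-4, -3, -2, -1⟩, ⟨2, 0, 0, 0⟩⟩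
def C : Raw := ⟨⟨0, 0, 1, -1⟩, ⟨0, 0, 0, 1⟩, ⟨0, -1, 1, -1⟩, ⟨0, 0, -1, 1⟩⟩
def powers (x : Raw) : ℕ → List Raw
  | 0 => []
  | n + 1 => one :: (powers x n).map (mul x)
def N : List Raw := powers A 10 ++ (powers A 10).map (mul B)
/-- Representatives of the six cosets of `N`. -/
def R : List Raw := one :: (powers A 5).map fun u => u.mul C
/-- The list of the 120 elements. -/
def L : List Raw := R.flatMap fun u => N.map fun n => u.mul n

def red (x : Zf) : ZMod 5 := x.a + x.b + x.c + x.d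

theorem one_mem : one ∈ L := by decide +kernel

theorem red_inj : ∀ x ∈ L, red x.p = 1 → red x.q = 0 → red x.r = 0 → red x.s = 1 → x = one := by
  decide +kernel

theorem red_surj : ∀ p q r s : ZMod 5, p * s - q * r = 1 →
    ∃ x ∈ L, red x.p = p ∧ red x.q = q ∧ red x.r = r ∧ red x.s = s := by
  decide +kernel

def mat (x : Raw) : Matrix (Fin 2) (Fin 2) Zf := !![x.p, x.q; x.r, x.s]

theorem mat_mul (x y : Raw) : (x.mul y).mat = x.mat * y.mat := by
  simp only [mat, Matrix.mul_fin_two]; rfl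

theorem mat_inj {x y : Raw} (h : x.mat = y.mat) : x = y := by
  have := congrFun (congrFun h 0) 0
  have := congrFun (congrFun h 0) 1
  have := congrFun (congrFun h 1) 0
  have := congrFun (congrFun h 1) 1
  ext1 <;> assumption

theorem mat_one : one.mat = 1 := by
  rw [Matrix.one_fin_two]; rfl

theorem mul_assoc' (x y z : Raw) : (x.mul y).mul z = x.mul (y.mul z) := by
  apply mat_inj; simp only [mat_mul, mul_assoc]

theorem one_mul' (x : Raw) : one.mul x = x := by
  apply mat_inj; simp only [mat_mul, mat_one, one_mul]

theorem N_gen : ∀ g ∈ [A, B], ∀ x ∈ N, g.mul x ∈ N := by decide +kernel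

theorem R_inv : ∀ v ∈ R, v.mul v.adj = one := by decide +kernel

theorem R_gen : ∀ g ∈ [A, B, C, A.adj, B.adj, C.adj], ∀ u ∈ R,
    ∃ v ∈ R, v.adj.mul (g.mul u) ∈ N := by decide +kernel

theorem powers_mul (k : ℕ) : ∀ y ∈ powers A k, ∀ x ∈ N, y.mul x ∈ N := by
  induction k with
  | zero => simp [powers]
  | succ n ih =>
    intro y hy x hx
    simp only [powers, List.mem_cons, List.mem_map] at hy
    rcases hy with rfl | ⟨z, hz, rfl⟩
    · rwa [one_mul']
    · rw [mul_assoc']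
      exact N_gen A (by simp) _ (ih z hz x hx)

theorem N_mul : ∀ y ∈ N, ∀ x ∈ N, y.mul x ∈ N := by
  intro y hy x hx
  rcases List.mem_append.1 hy with hy | hy
  · exact powers_mul 10 y hy x hx
  · obtain ⟨z, hz, rfl⟩ := List.mem_map.1 hy
    rw [mul_assoc']
    exact N_gen B (by simp) _ (powers_mul 10 z hz x hx)

theorem closed : ∀ g ∈ [A, B, C, A.adj, B.adj, C.adj], ∀ x ∈ L, g.mul x ∈ L := by
  intro g hg x hx
  obtain ⟨u, hu, hx⟩ := List.mem_flatMap.1 hx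
  obtain ⟨n, hn, rfl⟩ := List.mem_map.1 hx
  obtain ⟨v, hv, hm⟩ := R_gen g hg u hu
  refine List.mem_flatMap.2 ⟨v, hv, List.mem_map.2 ⟨_, N_mul _ hm n hn, ?_⟩⟩
  rw [← mul_assoc', ← mul_assoc', R_inv v hv, one_mul', mul_assoc']

def det (x : Raw) : Zf := (x.p.mul x.s).add (x.q.mul x.r).neg

theorem det_mat (x : Raw) : x.mat.det = x.det := by
  simp only [mat, Matrix.det_fin_two_of, sub_eq_add_neg]; rfl

abbrev SLR := Matrix.SpecialLinearGroup (Fin 2) Zf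

def toSL (x : Raw) (h : x.det = 1) : SLR := ⟨x.mat, by rw [det_mat, h]⟩

theorem coe_toSL_inv (x : Raw) (h : x.det = 1) : ((x.toSL h)⁻¹ : SLR).1 = x.adj.mat := by
  rw [Matrix.SpecialLinearGroup.coe_inv]
  simp only [toSL, mat, adj, Matrix.adjugate_fin_two_of]; rfl

def sA : SLR := A.toSL (by decide +kernel)
def sB : SLR := B.toSL (by decide +kernel)
def sC : SLR := C.toSL (by decide +kernel)

/-- The group generated by the three matrices. -/
def H : Subgroup SLR := Subgroup.closure {sA, sB, sC}

theorem H_sub {x : SLR} (hx : x ∈ H) : ∃ y ∈ L, x.1 = y.mat := by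
  induction hx using Subgroup.closure_induction_left with
  | one =>
    refine ⟨one, one_mem, ?_⟩
    rw [Matrix.SpecialLinearGroup.coe_one, Matrix.one_fin_two]; rfl
  | mul_left g hg y _ ih =>
    obtain ⟨z, hz, e⟩ := ih
    rw [Matrix.SpecialLinearGroup.coe_mul, e]
    rcases hg with rfl | rfl | rfl
    · exact ⟨A.mul z, closed _ (by simp) _ hz, (mat_mul _ _).symm⟩
    · exact ⟨B.mul z, closed _ (by simp) _ hz, (mat_mul _ _).symm⟩
    · exact ⟨C.mul z, closed _ (by simp) _ hz, (mat_mul _ _).symm⟩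
  | inv_mul_cancel g hg y _ ih =>
    obtain ⟨z, hz, e⟩ := ih
    rw [Matrix.SpecialLinearGroup.coe_mul, e]
    rcases hg with rfl | rfl | rfl
    · refine ⟨A.adj.mul z, closed _ (by simp) _ hz, ?_⟩
      rw [mat_mul, sA, coe_toSL_inv]
    · refine ⟨B.adj.mul z, closed _ (by simp) _ hz, ?_⟩
      rw [mat_mul, sB, coe_toSL_inv]
    · refine ⟨C.adj.mul z, closed _ (by simp) _ hz, ?_⟩
      rw [mat_mul, sC, coe_toSL_inv]

theorem powers_sub {x : Raw} {s : SLR} (h : s.1 = x.mat) (hs : s ∈ H) (n : ℕ) :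
    ∀ y ∈ powers x n, ∃ t ∈ H, t.1 = y.mat := by
  induction n with
  | zero => simp [powers]
  | succ n ih =>
    intro y hy
    simp only [powers, List.mem_cons, List.mem_map] at hy
    rcases hy with rfl | ⟨z, hz, rfl⟩
    · refine ⟨1, H.one_mem, ?_⟩
      rw [Matrix.SpecialLinearGroup.coe_one, Matrix.one_fin_two]; rfl
    · obtain ⟨t, ht, e⟩ := ih z hz
      exact ⟨s * t, H.mul_mem hs ht, by rw [Matrix.SpecialLinearGroup.coe_mul, e, h, mat_mul]⟩

theorem sA_mem : sA ∈ H := Subgroup.subset_closure (by simp)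
theorem sB_mem : sB ∈ H := Subgroup.subset_closure (by simp)
theorem sC_mem : sC ∈ H := Subgroup.subset_closure (by simp)

theorem N_sub : ∀ y ∈ N, ∃ t ∈ H, t.1 = y.mat := by
  intro y hy
  rcases List.mem_append.1 hy with hy | hy
  · exact powers_sub (s := sA) rfl sA_mem 10 y hy
  · obtain ⟨z, hz, rfl⟩ := List.mem_map.1 hy
    obtain ⟨t, ht, e⟩ := powers_sub (s := sA) rfl sA_mem 10 z hz
    exact ⟨sB * t, H.mul_mem sB_mem ht, by
      rw [Matrix.SpecialLinearGroup.coe_mul, e, mat_mul]; rfl⟩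

theorem R_sub : ∀ y ∈ R, ∃ t ∈ H, t.1 = y.mat := by
  intro y hy
  rcases List.mem_cons.1 hy with rfl | hy
  · exact ⟨1, H.one_mem, mat_one.symm⟩
  · obtain ⟨u, hu, rfl⟩ := List.mem_map.1 hy
    obtain ⟨t, ht, e⟩ := powers_sub (s := sA) rfl sA_mem 5 u hu
    exact ⟨t * sC, H.mul_mem ht sC_mem, by
      rw [Matrix.SpecialLinearGroup.coe_mul, e, mat_mul]; rfl⟩

theorem L_sub : ∀ y ∈ L, ∃ t ∈ H, t.1 = y.mat := by
  intro y hy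
  obtain ⟨u, hu, hy⟩ := List.mem_flatMap.1 hy
  obtain ⟨n, hn, rfl⟩ := List.mem_map.1 hy
  obtain ⟨t, ht, e⟩ := R_sub u hu
  obtain ⟨t2, ht2, e2⟩ := N_sub n hn
  exact ⟨t * t2, H.mul_mem ht ht2, by rw [Matrix.SpecialLinearGroup.coe_mul, e, e2, mat_mul]⟩

/-- Reduction modulo `1 - ζ`. -/
def redHom : Zf →+* ZMod 5 := Zf.eval 1 (by decide)

theorem redHom_apply (x : Zf) : redHom x = red x := by
  simp [redHom, Zf.eval, red]

def rHom : H →* SL25 := (Matrix.SpecialLinearGroup.map redHom).comp H.subtype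

theorem rHom_inj : Function.Injective rHom := by
  rw [injective_iff_map_eq_one]
  rintro ⟨x, hx⟩ h
  obtain ⟨y, hy, e⟩ := H_sub hx
  have h1 : ∀ i j, redHom (x.1 i j) = (1 : Matrix (Fin 2) (Fin 2) (ZMod 5)) i j := by
    intro i j
    exact congrFun (congrFun (congrArg Subtype.val h) i) j
  rw [e] at h1
  simp only [redHom_apply] at h1
  have := red_inj y hy (h1 0 0) (h1 0 1) (h1 1 0) (h1 1 1)
  subst this
  ext1
  apply Subtype.ext
  change x.1 = _
  rw [e, Subgroup.coe_one, Matrix.SpecialLinearGroup.coe_one, Matrix.one_fin_two]; rfl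

theorem rHom_surj : Function.Surjective rHom := by
  intro y
  have hd := y.2
  rw [Matrix.det_fin_two] at hd
  obtain ⟨x, hx, e⟩ := red_surj _ _ _ _ hd
  obtain ⟨t, ht, e2⟩ := L_sub x hx
  refine ⟨⟨t, ht⟩, ?_⟩
  ext i j
  change redHom (t.1 i j) = y.1 i j
  rw [e2, redHom_apply]
  fin_cases i <;> fin_cases j
  · exact e.1
  · exact e.2.1
  · exact e.2.2.1
  · exact e.2.2.2

/-- The group generated by the three matrices is `SL(2,5)`. -/
def HEquiv : H ≃* SL25 := MulEquiv.ofBijective rHom ⟨rHom_inj, rHom_surj⟩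

theorem sA_coe : sA.1 = A.mat := rfl
theorem sB_coe : sB.1 = B.mat := rfl
theorem sC_coe : sC.1 = C.mat := rfl

theorem rel1 : (sC * sB * sA) ^ 3 = 1 := by
  apply Subtype.ext
  simp only [pow_succ, pow_zero, one_mul, Matrix.SpecialLinearGroup.coe_mul, sA_coe, sB_coe,
    sC_coe, ← mat_mul]
  rw [Matrix.SpecialLinearGroup.coe_one, Matrix.one_fin_two]
  refine (congrArg mat (a₂ := one) ?_).trans rfl
  decide +kernel

theorem rel2 : sB = sA * sA * (sC * sB) * sA * sA * sA * (sC * sB) * sA * sA * (sC * sB) := by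
  apply Subtype.ext
  simp only [Matrix.SpecialLinearGroup.coe_mul, sA_coe, sB_coe, sC_coe, ← mat_mul]
  refine congrArg mat ?_
  decide +kernel

theorem neg_one_coe : (-1 : SLR).1 = mat ⟨⟨-1, 0, 0, 0⟩, ⟨0, 0, 0, 0⟩, ⟨0, 0, 0, 0⟩, ⟨-1, 0, 0, 0⟩⟩ := by
  rw [Matrix.SpecialLinearGroup.coe_neg, Matrix.SpecialLinearGroup.coe_one, Matrix.one_fin_two]
  apply Matrix.ext
  intro i j
  fin_cases i <;> fin_cases j <;> rfl

theorem rel3 : (sC * sB) * (sC * sB) = -1 := by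
  apply Subtype.ext
  rw [neg_one_coe]
  simp only [Matrix.SpecialLinearGroup.coe_mul, sB_coe, sC_coe, ← mat_mul]
  refine congrArg mat ?_
  decide +kernel

end Raw

theorem card_SL25 : Nat.card SL25 = 120 := by
  have e : SL25 ≃ {x : ZMod 5 × ZMod 5 × ZMod 5 × ZMod 5 // x.1 * x.2.2.2 - x.2.1 * x.2.2.1 = 1} :=
    { toFun := fun y => ⟨(y.1 0 0, y.1 0 1, y.1 1 0, y.1 1 1), by
        have := y.2; rwa [Matrix.det_fin_two] at this⟩
      invFun := fun x => ⟨!![x.1.1, x.1.2.1; x.1.2.2.1, x.1.2.2.2], by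
        rw [Matrix.det_fin_two_of]; exact x.2⟩
      left_inv := fun y => by
        ext i j
        fin_cases i <;> fin_cases j <;> rfl
      right_inv := fun x => rfl }
  rw [Nat.card_congr e, Nat.card_eq_fintype_card]
  decide +kernel

theorem zeta5_prim : IsPrimitiveRoot zeta5 5 := by
  have := Complex.isPrimitiveRoot_exp 5 (by norm_num)
  simpa [zeta5] using this

theorem zeta5_ne : zeta5 ≠ 0 := zeta5_prim.ne_zero (by norm_num)

theorem zeta5_pow : zeta5 ^ 5 = 1 := zeta5_prim.pow_eq_one

theorem zeta5_rel : 1 + zeta5 + zeta5 ^ 2 + zeta5 ^ 3 + zeta5 ^ 4 = 0 := by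
  have := zeta5_prim.geom_sum_eq_zero (by norm_num)
  simpa [Finset.sum_range_succ] using this

theorem zeta5_inv : zeta5⁻¹ = zeta5 ^ 4 := by
  apply inv_eq_of_mul_eq_one_right
  linear_combination zeta5_pow

theorem kappa_eq : (zeta5 ^ 2 - zeta5 ^ 3)⁻¹ = (2 + zeta5 + 4 * zeta5 ^ 3 + 3 * zeta5 ^ 4) / 5 := by
  apply inv_eq_of_mul_eq_one_right
  have h := zeta5_rel
  grind

theorem sqrt5_sq : sqrt5 * sqrt5 = 5 := by
  have h := zeta5_rel
  unfold sqrt5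
  grind

theorem sqrt5_inv : sqrt5⁻¹ = sqrt5 / 5 := by
  apply inv_eq_of_mul_eq_one_right
  linear_combination sqrt5_sq / 5

def evC : Zf →+* ℂ := Zf.eval zeta5 zeta5_rel

theorem evC_apply (x : Zf) :
    evC x = x.a + x.b * zeta5 + x.c * zeta5 ^ 2 + x.d * zeta5 ^ 3 := rfl

theorem evC_inj : Function.Injective evC := by
  rw [injective_iff_map_eq_zero]
  intro x hx
  rw [evC_apply] at hx
  open Polynomial in
  let p : ℤ[X] := C x.a + C x.b * X + C x.c * X ^ 2 + C x.d * X ^ 3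
  have hp : Polynomial.aeval zeta5 p = 0 := by
    simpa [p] using hx
  have hdvd : minpoly ℤ zeta5 ∣ p :=
    minpoly.isIntegrallyClosed_dvd (zeta5_prim.isIntegral (by norm_num)) hp
  have hdeg : (minpoly ℤ zeta5).degree = 4 := by
    rw [← Polynomial.cyclotomic_eq_minpoly zeta5_prim (by norm_num), Polynomial.degree_cyclotomic]
    rw [Nat.totient_prime (by norm_num)]
    rfl
  have hp0 : p = 0 := by
    apply Polynomial.eq_zero_of_dvd_of_degree_lt hdvd
    rw [hdeg]
    refine lt_of_le_of_lt (b := 3) ?_ (by decide)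
    simp only [p]
    compute_degree
  have h0 : p.coeff 0 = 0 := by rw [hp0]; simp
  have h1 : p.coeff 1 = 0 := by rw [hp0]; simp
  have h2 : p.coeff 2 = 0 := by rw [hp0]; simp
  have h3 : p.coeff 3 = 0 := by rw [hp0]; simp
  simp only [p, Polynomial.coeff_add, Polynomial.coeff_C_mul, Polynomial.coeff_X,
    Polynomial.coeff_X_pow, Polynomial.coeff_C] at h0 h1 h2 h3
  norm_num at h0 h1 h2 h3
  ext
  · exact h0
  · exact h1
  · exact h2
  · exact h3

theorem emb_mul (A B : Matrix (Fin 2) (Fin 2) ℂ) : emb (A * B) = emb A * emb B := by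
  ext i j
  fin_cases i <;> fin_cases j <;>
    simp [emb, Matrix.mul_apply, Fin.sum_univ_two, Fin.sum_univ_three]

theorem emb_one : emb 1 = 1 := by
  ext i j
  fin_cases i <;> fin_cases j <;> simp [emb]

theorem emb_inj : Function.Injective emb := by
  intro A B h
  ext i j
  have := congrFun (congrFun h i.castSucc) j.castSucc
  fin_cases i <;> fin_cases j <;> simpa [emb] using this

theorem emb_det (A : Matrix (Fin 2) (Fin 2) ℂ) : (emb A).det = A.det := by
  rw [Matrix.det_fin_three, Matrix.det_fin_two]; simp [emb]

def embHom : Matrix (Fin 2) (Fin 2) ℂ →* Matrix (Fin 3) (Fin 3) ℂ where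
  toFun := emb
  map_one' := emb_one
  map_mul' := emb_mul

def Pm : Matrix (Fin 2) (Fin 2) ℂ := !![1, 0; -2, 1 - zeta5]

theorem Pm_det : Pm.det ≠ 0 := by
  rw [Pm, Matrix.det_fin_two_of]
  simpa [sub_eq_zero] using (zeta5_prim.ne_one (by norm_num)).symm

def P2 : GL (Fin 2) ℂ := Matrix.GeneralLinearGroup.mkOfDetNeZero Pm Pm_det

theorem P2_coe : (P2 : Matrix (Fin 2) (Fin 2) ℂ) = Pm := rfl

open Raw

def cHom : SLR →* GL (Fin 2) ℂ :=
  (MulAut.conj P2).toMonoidHom.comp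
    (Matrix.SpecialLinearGroup.toGL.comp (Matrix.SpecialLinearGroup.map evC))

def eHom : SLR →* GL (Fin 3) ℂ := (Units.map embHom).comp cHom

theorem cHom_coe (x : SLR) : (cHom x : Matrix (Fin 2) (Fin 2) ℂ) =
    P2 * (x.1.map evC) * ((P2⁻¹ : GL (Fin 2) ℂ) : Matrix (Fin 2) (Fin 2) ℂ) := rfl

theorem eHom_coe (x : SLR) : (eHom x : Matrix (Fin 3) (Fin 3) ℂ) = emb (cHom x) := rfl

theorem cHom_eq (x : SLR) (M : Matrix (Fin 2) (Fin 2) ℂ) (h : Pm * x.1.map evC = M * Pm) :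
    (cHom x : Matrix (Fin 2) (Fin 2) ℂ) = M := by
  rw [cHom_coe, P2_coe, h, ← P2_coe, mul_assoc, Units.mul_inv, mul_one]

theorem eHom_inj : Function.Injective eHom := by
  have h1 : Function.Injective (Units.map embHom) := Units.map_injective emb_inj
  have h2 : Function.Injective cHom := by
    refine (MulAut.conj P2).injective.comp ?_
    intro x y h
    apply Subtype.ext
    ext1 i j
    apply evC_inj
    have := congrFun (congrFun (congrArg (fun g : GL (Fin 2) ℂ =>
      (g : Matrix (Fin 2) (Fin 2) ℂ)) h) i) j
    exact this
  exact h1.comp h2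

theorem eHom_det (x : SLR) : (eHom x : Matrix (Fin 3) (Fin 3) ℂ).det = 1 := by
  rw [eHom_coe, emb_det, cHom_coe, Matrix.det_units_conj]
  exact (Matrix.SpecialLinearGroup.map evC x).2

theorem eHom_A : (eHom sA : Matrix (Fin 3) (Fin 3) ℂ) = alpha' := by
  rw [eHom_coe, alpha']
  congr 1
  apply cHom_eq
  have h := zeta5_rel
  rw [sA_coe]
  ext i j
  fin_cases i <;> fin_cases j <;>
    simp [Pm, Raw.A, mat, alpha, Matrix.mul_apply, Fin.sum_univ_two, evC_apply] <;> grind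

theorem eHom_B : (eHom sB : Matrix (Fin 3) (Fin 3) ℂ) = beta' := by
  rw [eHom_coe, beta']
  congr 1
  apply cHom_eq
  have h := zeta5_rel
  rw [sB_coe]
  ext i j
  fin_cases i <;> fin_cases j <;>
    simp [Pm, Raw.B, mat, beta, Matrix.mul_apply, Fin.sum_univ_two, evC_apply] <;> grind

theorem eHom_C : (eHom sC : Matrix (Fin 3) (Fin 3) ℂ) = gamma' := by
  rw [eHom_coe, gamma']
  congr 1
  apply cHom_eq
  have h := zeta5_rel
  rw [sC_coe, gamma, kappa_eq, zeta5_inv]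
  ext i j
  fin_cases i <;> fin_cases j <;>
    simp [Pm, Raw.C, mat, Matrix.mul_apply, Fin.sum_univ_two, evC_apply] <;> grind

theorem eHom_sigma : (eHom (sC * sB) : Matrix (Fin 3) (Fin 3) ℂ) = sigma := by
  rw [map_mul, Units.val_mul, eHom_C, eHom_B, gamma', beta', ← emb_mul]
  have h := zeta5_rel
  rw [gamma, kappa_eq, zeta5_inv, beta, sigma]
  simp only [div_eq_mul_inv _ sqrt5, sqrt5_inv]
  unfold sqrt5
  ext i j
  fin_cases i <;> fin_cases j <;>
    simp [emb, Matrix.mul_apply, Fin.sum_univ_two] <;> grind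

def delta1 : ℂ →* Matrix (Fin 3) (Fin 3) ℂ where
  toFun a := Matrix.diagonal ![a, a, 1]
  map_one' := by ext i j; fin_cases i <;> fin_cases j <;> simp
  map_mul' a b := by
    ext i j; fin_cases i <;> fin_cases j <;> simp

def delta2 : ℂ →* Matrix (Fin 3) (Fin 3) ℂ where
  toFun a := Matrix.diagonal ![1, 1, a]
  map_one' := by ext i j; fin_cases i <;> fin_cases j <;> simp
  map_mul' a b := by
    ext i j; fin_cases i <;> fin_cases j <;> simp

theorem delta1_apply (a : ℂ) : delta1 a = Matrix.diagonal ![a, a, 1] := rfl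
theorem delta2_apply (a : ℂ) : delta2 a = Matrix.diagonal ![1, 1, a] := rfl

theorem delta1_inj : Function.Injective delta1 := by
  intro a b h
  simpa [delta1_apply] using congrFun (congrFun h 0) 0

theorem delta2_inj : Function.Injective delta2 := by
  intro a b h
  simpa [delta2_apply] using congrFun (congrFun h 2) 2

theorem emb_delta1 (M : Matrix (Fin 2) (Fin 2) ℂ) (a : ℂ) :
    emb M * delta1 a = delta1 a * emb M := by
  rw [delta1_apply]
  ext i j
  fin_cases i <;> fin_cases j <;>
    simp [emb, mul_comm]

theorem emb_delta2 (M : Matrix (Fin 2) (Fin 2) ℂ) (a : ℂ) :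
    emb M * delta2 a = delta2 a * emb M := by
  rw [delta2_apply]
  ext i j
  fin_cases i <;> fin_cases j <;>
    simp [emb]

theorem delta1_emb (a : ℂ) : delta1 a = emb (Matrix.diagonal ![a, a]) := by
  rw [delta1_apply]
  ext i j
  fin_cases i <;> fin_cases j <;>
    simp [emb]

def w30 : ℂ := Complex.exp (2 * Real.pi * Complex.I / 30)

theorem w30_prim : IsPrimitiveRoot w30 30 := by
  have := Complex.isPrimitiveRoot_exp 30 (by norm_num)
  simpa [w30] using this

def zu : ℂˣ := Units.mk0 zeta5 zeta5_ne
def wu : ℂˣ := Units.mk0 w30 (w30_prim.ne_zero (by norm_num))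

theorem zu_order : orderOf zu = 5 := by
  rw [← orderOf_units]; exact zeta5_prim.eq_orderOf.symm
theorem wu_order : orderOf wu = 30 := by
  rw [← orderOf_units]; exact w30_prim.eq_orderOf.symm

def dG : GL (Fin 3) ℂ := Units.map delta1 zu
def lG : GL (Fin 3) ℂ := Units.map delta2 wu
def aG : GL (Fin 3) ℂ := eHom sA
def bG : GL (Fin 3) ℂ := eHom sB
def cG : GL (Fin 3) ℂ := eHom sC
def sG : GL (Fin 3) ℂ := eHom (sC * sB)
def tG : GL (Fin 3) ℂ := sG * sG * aG * dG ^ 3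

theorem dG_order : orderOf dG = 5 := by
  rw [dG, orderOf_injective _ (Units.map_injective delta1_inj), zu_order]
theorem lG_order : orderOf lG = 30 := by
  rw [lG, orderOf_injective _ (Units.map_injective delta2_inj), wu_order]

theorem tG_coe : (tG : Matrix (Fin 3) (Fin 3) ℂ) = tau := by
  have h1 : sG * sG = eHom (-1) := by rw [sG, ← map_mul, rel3]
  have h2 : (eHom (-1) : Matrix (Fin 3) (Fin 3) ℂ) = emb (-1) := by
    rw [eHom_coe]
    congr 1
    apply cHom_eq
    rw [neg_one_coe]
    ext i j
    fin_cases i <;> fin_cases j <;>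
      simp [Pm, mat, Matrix.mul_apply, Fin.sum_univ_two, evC_apply]
  have h3 : ((dG ^ 3 : GL (Fin 3) ℂ) : Matrix (Fin 3) (Fin 3) ℂ) = delta1 (zeta5 ^ 3) := by
    rw [map_pow]; rfl
  have h := zeta5_pow
  rw [tG, h1, Units.val_mul, Units.val_mul, h2, h3, aG, eHom_A, alpha', ← emb_mul, delta1_emb,
    ← emb_mul, tau, alpha]
  ext i j
  fin_cases i <;> fin_cases j <;>
    simp [emb] <;> grind

theorem gen3_image (T : Set (GL (Fin 3) ℂ)) :
    gen3 ((fun g : GL (Fin 3) ℂ => (g : Matrix (Fin 3) (Fin 3) ℂ)) '' T) = Subgroup.closure T := by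
  rw [gen3]
  congr 1
  ext g
  constructor
  · rintro ⟨k, hk, e⟩
    rwa [← Units.ext e]
  · exact fun hg => ⟨g, hg, rfl⟩

theorem S21_closure : S21 = Subgroup.closure {aG, bG, cG} := by
  rw [← gen3_image, S21, Set.image_insert_eq, Set.image_insert_eq, Set.image_singleton, ← eHom_A,
    ← eHom_B, ← eHom_C]
  rfl

theorem S21_map : S21 = H.map eHom := by
  rw [S21_closure, H, MonoidHom.map_closure, Set.image_insert_eq, Set.image_insert_eq,
    Set.image_singleton]
  rfl

theorem Dz_eq : Dz = Subgroup.zpowers dG := by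
  rw [Subgroup.zpowers_eq_closure, ← gen3_image, Dz, Set.image_singleton]
  rfl

theorem L30_eq : L30 = Subgroup.zpowers lG := by
  rw [Subgroup.zpowers_eq_closure, ← gen3_image, L30, Set.image_singleton]
  rfl

theorem Gt30_closure : Gt30 = Subgroup.closure {sG, tG, lG} := by
  rw [← gen3_image, Gt30, Set.image_insert_eq, Set.image_insert_eq, Set.image_singleton, tG_coe,
    ← eHom_sigma]
  rfl

theorem Dz_form {x : GL (Fin 3) ℂ} (hx : x ∈ Dz) : ∃ u : ℂˣ, u ^ 5 = 1 ∧ x = Units.map delta1 u := by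
  rw [Dz_eq] at hx
  obtain ⟨k, rfl⟩ := hx
  refine ⟨zu ^ k, ?_, ?_⟩
  · rw [← zpow_natCast, ← _root_.zpow_mul, mul_comm, _root_.zpow_mul, zpow_natCast, ← zu_order, pow_orderOf_eq_one,
      _root_.one_zpow]
  · rw [map_zpow]; rfl

theorem L30_form {x : GL (Fin 3) ℂ} (hx : x ∈ L30) : ∃ u : ℂˣ, x = Units.map delta2 u := by
  rw [L30_eq] at hx
  obtain ⟨k, rfl⟩ := hx
  exact ⟨wu ^ k, by rw [map_zpow]; rfl⟩

theorem S21_form {x : GL (Fin 3) ℂ} (hx : x ∈ S21) : ∃ h : SLR, x = eHom h := by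
  rw [S21_map] at hx
  obtain ⟨h, _, rfl⟩ := hx
  exact ⟨h, rfl⟩

theorem comm1 : ∀ a ∈ S21, ∀ b ∈ Dz, a * b = b * a := by
  intro a ha b hb
  obtain ⟨h, rfl⟩ := S21_form ha
  obtain ⟨u, -, rfl⟩ := Dz_form hb
  exact Units.ext (emb_delta1 _ _)

theorem comm2 : ∀ a ∈ S21, ∀ b ∈ L30, a * b = b * a := by
  intro a ha b hb
  obtain ⟨h, rfl⟩ := S21_form ha
  obtain ⟨u, rfl⟩ := L30_form hb
  exact Units.ext (emb_delta2 _ _)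

theorem comm3 : ∀ a ∈ Dz, ∀ b ∈ L30, a * b = b * a := by
  intro a ha b hb
  obtain ⟨h, -, rfl⟩ := Dz_form ha
  obtain ⟨u, rfl⟩ := L30_form hb
  apply Units.ext
  change delta1 _ * delta2 _ = delta2 _ * delta1 _
  rw [delta1_emb, emb_delta2]

theorem inf1 : S21 ⊓ Dz = ⊥ := by
  rw [eq_bot_iff]
  rintro x ⟨hx, hy⟩
  obtain ⟨h, rfl⟩ := S21_form hx
  obtain ⟨u, hu, e⟩ := Dz_form hy
  have hd := eHom_det h
  rw [e] at hd
  change (delta1 u).det = 1 at hd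
  rw [delta1_emb, emb_det, Matrix.det_diagonal, Fin.prod_univ_two] at hd
  have h2 : u ^ 2 = 1 := by
    apply Units.ext
    rw [pow_two]
    simpa using hd
  have h1 : u = 1 := by
    calc u = u ^ 5 * ((u ^ 2) ^ 2)⁻¹ := by group
      _ = 1 := by rw [hu, h2]; simp
  rw [Subgroup.mem_bot, e, h1, map_one]

theorem inf2 : (S21 ⊔ Dz) ⊓ L30 = ⊥ := by
  have hle : S21 ⊔ Dz ≤ (Units.map embHom).range := by
    apply sup_le
    · intro x hx
      obtain ⟨h, rfl⟩ := S21_form hx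
      exact ⟨cHom h, rfl⟩
    · rw [Dz_eq, Subgroup.zpowers_le]
      have hz : (Matrix.diagonal ![zeta5, zeta5]).det ≠ 0 := by
        rw [Matrix.det_diagonal, Fin.prod_univ_two]
        simpa using zeta5_ne
      refine ⟨Matrix.GeneralLinearGroup.mkOfDetNeZero _ hz, ?_⟩
      apply Units.ext
      exact (delta1_emb _).symm
  rw [eq_bot_iff]
  rintro x ⟨hx, hy⟩
  obtain ⟨g, rfl⟩ := hle hx
  obtain ⟨u, e⟩ := L30_form hy
  have h22 := congrFun (congrFun (congrArg (fun g : GL (Fin 3) ℂ =>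
      (g : Matrix (Fin 3) (Fin 3) ℂ)) e) 2) 2
  change emb _ 2 2 = delta2 u 2 2 at h22
  have hu : u = 1 := by
    apply Units.ext
    simpa [emb, delta2_apply] using h22.symm
  rw [Subgroup.mem_bot, e, hu, map_one]

theorem sup_eq : S21 ⊔ Dz ⊔ L30 = Gt30 := by
  have hs : sG = cG * bG := by rw [sG, map_mul]; rfl
  have ha : aG ∈ S21 := by rw [S21_closure]; exact Subgroup.subset_closure (by simp)
  have hb : bG ∈ S21 := by rw [S21_closure]; exact Subgroup.subset_closure (by simp)
  have hc : cG ∈ S21 := by rw [S21_closure]; exact Subgroup.subset_closure (by simp)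
  have hsm : sG ∈ S21 := by rw [hs]; exact S21.mul_mem hc hb
  have hd : dG ∈ Dz := by rw [Dz_eq]; exact Subgroup.mem_zpowers _
  have hl : lG ∈ L30 := by rw [L30_eq]; exact Subgroup.mem_zpowers _
  have l1 : S21 ≤ S21 ⊔ Dz ⊔ L30 := le_sup_left.trans le_sup_left
  have l2 : Dz ≤ S21 ⊔ Dz ⊔ L30 := le_sup_right.trans le_sup_left
  have l3 : L30 ≤ S21 ⊔ Dz ⊔ L30 := le_sup_right
  have gs : sG ∈ Gt30 := by rw [Gt30_closure]; exact Subgroup.subset_closure (by simp)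
  have gt : tG ∈ Gt30 := by rw [Gt30_closure]; exact Subgroup.subset_closure (by simp)
  have gl : lG ∈ Gt30 := by rw [Gt30_closure]; exact Subgroup.subset_closure (by simp)
  have hss : ∀ x : SLR, Commute (sG * sG) (eHom x) := by
    intro x
    have h1 : sG * sG = eHom (-1) := by rw [sG, ← map_mul, rel3]
    rw [h1]
    exact (Commute.neg_left (Commute.one_left x)).map eHom
  have r1 : (sG * aG) ^ 3 = 1 := by
    rw [sG, aG, ← map_mul, ← map_pow, rel1, map_one]
  have r2 : bG = aG * aG * sG * aG * aG * aG * sG * aG * aG * sG := by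
    rw [sG, aG, bG]
    simp only [← map_mul]
    exact congrArg eHom (by simpa only [mul_assoc] using rel2)
  have d5 : dG ^ 5 = 1 := by rw [← dG_order, pow_orderOf_eq_one]
  have hst : (sG * tG) ^ 3 = (sG * sG) ^ 3 * dG ^ 9 := by
    have e1 : sG * tG = (sG * sG) * ((sG * aG) * dG ^ 3) := by rw [tG]; group
    have c1 : Commute (sG * aG) (dG ^ 3) := comm1 _ (S21.mul_mem hsm ha) _ (Dz.pow_mem hd 3)
    have c2 : Commute (sG * sG) ((sG * aG) * dG ^ 3) := by
      refine Commute.mul_right ?_ (comm1 _ (S21.mul_mem hsm hsm) _ (Dz.pow_mem hd 3))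
      rw [sG, aG, ← map_mul eHom (sC * sB) sA]
      exact hss _
    rw [e1, c2.mul_pow, c1.mul_pow, r1, one_mul, ← pow_mul]
  have hd' : dG = (((sG * sG) ^ 3)⁻¹ * (sG * tG) ^ 3) ^ 4 := by
    rw [hst, inv_mul_cancel_left, ← pow_mul]
    calc dG = (dG ^ 5) ^ 7 * dG := by rw [d5]; simp
      _ = dG ^ (9 * 4) := by rw [← pow_mul, ← pow_succ]
  have gd : dG ∈ Gt30 := by
    rw [hd']
    exact Gt30.pow_mem (Gt30.mul_mem (Gt30.inv_mem (Gt30.pow_mem (Gt30.mul_mem gs gs) 3))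
      (Gt30.pow_mem (Gt30.mul_mem gs gt) 3)) 4
  have ga : aG ∈ Gt30 := by
    have : aG = (sG * sG)⁻¹ * tG * (dG ^ 3)⁻¹ := by rw [tG]; group
    rw [this]
    exact Gt30.mul_mem (Gt30.mul_mem (Gt30.inv_mem (Gt30.mul_mem gs gs)) gt)
      (Gt30.inv_mem (Gt30.pow_mem gd 3))
  have gb : bG ∈ Gt30 := by
    rw [r2]
    have m : ∀ {x y : GL (Fin 3) ℂ}, x ∈ Gt30 → y ∈ Gt30 → x * y ∈ Gt30 := Gt30.mul_mem
    exact m (m (m (m (m (m (m (m (m ga ga) gs) ga) ga) ga) gs) ga) ga) gs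
  have gc : cG ∈ Gt30 := by
    have : cG = sG * bG⁻¹ := by rw [hs]; group
    rw [this]
    exact Gt30.mul_mem gs (Gt30.inv_mem gb)
  apply le_antisymm
  · refine sup_le (sup_le ?_ ?_) ?_
    · rw [S21_closure, Subgroup.closure_le]
      rintro x (rfl | rfl | rfl)
      exacts [ga, gb, gc]
    · rw [Dz_eq, Subgroup.zpowers_le]; exact gd
    · rw [L30_eq, Subgroup.zpowers_le]; exact gl
  · rw [Gt30_closure, Subgroup.closure_le]
    rintro x (rfl | rfl | rfl)
    · exact l1 hsm
    · exact Subgroup.mul_mem _ (l1 (S21.mul_mem (S21.mul_mem hsm hsm) ha)) (l2 (Dz.pow_mem hd 3))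
    · exact l3 hl

theorem zpowers_equiv (g : GL (Fin 3) ℂ) (n : ℕ) (h : orderOf g = n) :
    Nonempty (Subgroup.zpowers g ≃* Multiplicative (ZMod n)) := by
  refine ⟨mulEquivOfCyclicCardEq ?_⟩
  rw [Nat.card_zpowers, h, Nat.card_congr Multiplicative.toAdd, Nat.card_zmod]

theorem S21_equiv : Nonempty (S21 ≃* SL25) := by
  rw [S21_map]
  exact ⟨(H.equivMapOfInjective eHom eHom_inj).symm.trans HEquiv⟩

theorem Gt30_equiv : Nonempty (Gt30 ≃* SL25 × Multiplicative (ZMod 5) × Multiplicative (ZMod 30)) := by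
  obtain ⟨e1⟩ := S21_equiv
  obtain ⟨e2⟩ : Nonempty (Dz ≃* Multiplicative (ZMod 5)) := by
    rw [Dz_eq]; exact zpowers_equiv _ _ dG_order
  obtain ⟨e3⟩ : Nonempty (L30 ≃* Multiplicative (ZMod 30)) := by
    rw [L30_eq]; exact zpowers_equiv _ _ lG_order
  have hc0 : ∀ (a : S21) (b : Dz), Commute (S21.subtype a) (Dz.subtype b) :=
    fun a b => comm1 _ a.2 _ b.2
  let f : S21 × Dz →* GL (Fin 3) ℂ :=
    MonoidHom.noncommCoprod S21.subtype Dz.subtype hc0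
  have fr : f.range = S21 ⊔ Dz := by
    simp only [f]
    rw [MonoidHom.noncommCoprod_range, Subgroup.range_subtype, Subgroup.range_subtype]
  have fi : Function.Injective f := by
    simp only [f]
    rw [MonoidHom.noncommCoprod_injective]
    refine ⟨Subtype.val_injective, Subtype.val_injective, ?_⟩
    rw [Subgroup.range_subtype, Subgroup.range_subtype, disjoint_iff, inf1]
  have hc : ∀ (a : S21 × Dz) (b : L30), Commute (f a) (L30.subtype b) := fun a b =>
    Commute.mul_left (comm2 _ a.1.2 _ b.2) (comm3 _ a.2.2 _ b.2)
  let g : (S21 × Dz) × L30 →* GL (Fin 3) ℂ := MonoidHom.noncommCoprod f L30.subtype hc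
  have gr : g.range = Gt30 := by
    simp only [g]
    rw [MonoidHom.noncommCoprod_range, fr, Subgroup.range_subtype, sup_eq]
  have gi : Function.Injective g := by
    simp only [g]
    rw [MonoidHom.noncommCoprod_injective]
    refine ⟨fi, Subtype.val_injective, ?_⟩
    rw [fr, Subgroup.range_subtype, disjoint_iff, inf2]
  rw [← gr]
  exact ⟨(MonoidHom.ofInjective gi).symm.trans
    (MulEquiv.prodAssoc.trans (e1.prodCongr (e2.prodCongr e3)))⟩

theorem stmt11 :
    (∀ a ∈ S21, ∀ b ∈ Dz, a * b = b * a) ∧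
    (∀ a ∈ S21, ∀ b ∈ L30, a * b = b * a) ∧
    (∀ a ∈ Dz, ∀ b ∈ L30, a * b = b * a) ∧
    S21 ⊓ Dz = ⊥ ∧
    (S21 ⊔ Dz) ⊓ L30 = ⊥ ∧
    S21 ⊔ Dz ⊔ L30 = Gt30 ∧
    Nonempty (Gt30 ≃* SL25 × Multiplicative (ZMod 5) × Multiplicative (ZMod 30)) ∧
    Nat.card Gt30 = 18000 := by
  obtain ⟨e⟩ := Gt30_equiv
  refine ⟨comm1, comm2, comm3, inf1, inf2, sup_eq, ⟨e⟩, ?_⟩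
  rw [Nat.card_congr e.toEquiv, Nat.card_prod, Nat.card_prod, card_SL25,
    Nat.card_congr Multiplicative.toAdd, Nat.card_congr Multiplicative.toAdd, Nat.card_zmod,
    Nat.card_zmod]
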